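/- Let f : 𝖱^n → 𝖱 be continuous and let I ⊆ N = {1,…,n} be nonempty. (i) If f is I-bounded, then the set of countable ordinals α such that for every b ∈ [0,α]^{N∖I} the restriction of f to E_I(b,α) is constant, contains a closed unbounded subset of ω₁. (ii) If f is I-cofinal, then the set of countable ordinals α such that f(Δ_I(b) ∩ M_I(α)) ⊆ [α, ω₁) for every b ∈ [0,α]^{N∖I}, contains a closed unbounded subset of ω₁. -/

import Mathlib

noncomputable section
open Set

/-- The first uncountable ordinal `ω₁`. -/
def Omega1 : Ordinal := Ordinal.omega 1

/-- The closed long ray `𝖱`: `ω₁ × [0,1)` with the lexicographic order. -/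
def LongRay : Type 1 := {o : Ordinal // o < Omega1} ×ₗ (Set.Ico (0:ℝ) 1)

instance : LinearOrder LongRay :=
  inferInstanceAs (LinearOrder ({o : Ordinal // o < Omega1} ×ₗ (Set.Ico (0:ℝ) 1)))

/-- `𝖱` carries the order topology. -/
instance : TopologicalSpace LongRay := Preorder.topology LongRay
instance : OrderTopology LongRay := ⟨rfl⟩

lemma omega1_pos : (0 : Ordinal) < Omega1 := Ordinal.omega_pos 1

/-- The point `0 = (0,0)` of the long ray. -/
def rayZero : LongRay := toLex (⟨0, omega1_pos⟩, ⟨0, by simp⟩)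

/-- Identification of the countable ordinal `o` with the point `(o,0)` of the long ray
(junk value for `o ≥ ω₁`). -/
def ordR (o : Ordinal) : LongRay :=
  if h : o < Omega1 then toLex (⟨o, h⟩, ⟨0, by simp⟩) else rayZero

/-- The `I`-diagonal at height `c` (only the values of `c` off `I` are relevant). -/
def Delta (n : ℕ) (I : Finset (Fin n)) (c : Fin n → LongRay) : Set (Fin n → LongRay) :=
  {x | (∀ i ∈ I, ∀ i' ∈ I, x i = x i') ∧ ∀ j ∉ I, x j = c j}

/-- `f` is `I`-cofinal if `f` restricted to `Δ_I = Δ_I(0)` is unbounded. -/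
def ICofinal (n : ℕ) (f : (Fin n → LongRay) → LongRay) (I : Finset (Fin n)) : Prop :=
  ¬ BddAbove (f '' Delta n I (fun _ => rayZero))

/-- The cofinality class `𝔠(f) = {I : f is I-cofinal}`. -/
def cofClass (n : ℕ) (f : (Fin n → LongRay) → LongRay) : Set (Finset (Fin n)) :=
  {I | ICofinal n f I}

/-- `M_I(c) = {x : x_i ≥ c for all i ∈ I}`. -/
def MSet (n : ℕ) (I : Finset (Fin n)) (c : LongRay) : Set (Fin n → LongRay) :=
  {x | ∀ i ∈ I, c ≤ x i}

/-- `E_I(b,d) = {x ∈ M_I(d) : x_j = b_j for all j ∉ I}`. -/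
def ESet (n : ℕ) (I : Finset (Fin n)) (b : Fin n → LongRay) (d : LongRay) :
    Set (Fin n → LongRay) :=
  {x | (∀ i ∈ I, d ≤ x i) ∧ ∀ j ∉ I, x j = b j}

/-- `S` contains a subset of `ω₁` that is unbounded in `ω₁` and closed under suprema
of countable subsets (i.e. a club of `ω₁`). -/
def ContainsClub (S : Set Ordinal) : Prop :=
  ∃ C : Set Ordinal, C ⊆ S ∧ (∀ a < Omega1, ∃ b ∈ C, a ≤ b) ∧
    (∀ T ⊆ C, T.Countable → T.Nonempty → sSup T ∈ C)

section Interleaving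

open Filter Topology

variable {X : Type*} [ConditionallyCompleteLinearOrder X] [TopologicalSpace X] [OrderTopology X]

/-- Interleaving: choosing points of `S k` further and further out, one obtains a sequence
converging to a point of the diagonal. -/
theorem exists_seq_tendsto_const {ι : Type*} [Countable ι]
    (hX : ∀ s : Set X, s.Countable → BddAbove s) (S : ℕ → Set (ι → X))
    (hS : ∀ k α, ∃ x ∈ S k, ∀ i, α ≤ x i) (α₀ : X) :
    ∃ (x : ℕ → ι → X) (γ : X), α₀ ≤ γ ∧ (∀ k, x k ∈ S k) ∧
      Tendsto x atTop (𝓝 fun _ => γ) := by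
  choose p hpS hp using hS
  have hub : ∀ k α, ∃ β, α ≤ β ∧ ∀ i, p k α i ≤ β := by
    intro k α
    obtain ⟨β, hβ⟩ := hX (insert α (range (p k α))) ((countable_range _).insert α)
    exact ⟨β, hβ (mem_insert _ _), fun i => hβ (mem_insert_of_mem _ (mem_range_self i))⟩
  choose u hu hpu using hub
  let a : ℕ → X := fun k => Nat.rec α₀ u k
  have ha : Monotone a := monotone_nat_of_le_succ fun k => hu k (a k)
  have hbdd : BddAbove (range a) := hX _ (countable_range a)
  have hlim := tendsto_atTop_ciSup ha hbdd
  refine ⟨fun k => p k (a k), ⨆ k, a k, le_ciSup hbdd 0, fun k => hpS _ _, ?_⟩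
  rw [tendsto_pi_nhds]
  intro i
  exact tendsto_of_tendsto_of_tendsto_of_le_of_le hlim (hlim.comp (tendsto_add_atTop_nat 1))
    (fun k => hp k (a k) i) fun k => hpu k (a k) i

theorem firstCountableTopology_of_countable_dense_initial
    (hD : ∀ z : X, ∃ D : Set X, D.Countable ∧ ∀ x y, x < y → x ≤ z → ∃ d ∈ D, x < d ∧ d < y) :
    FirstCountableTopology X := by
  refine ⟨fun a => ?_⟩
  obtain ⟨D, hDc, hD⟩ := hD a
  have h : 𝓝 a = (⨅ d : ↥(D ∩ Iio a), 𝓟 (Ioi d.1)) ⊓ ⨅ d : ↥(D ∩ Ioi a), 𝓟 (Iio d.1) := by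
    rw [nhds_eq_order]
    refine le_antisymm (inf_le_inf ?_ ?_) (inf_le_inf ?_ ?_)
    · exact le_iInf fun d => iInf₂_le d.1 d.2.2
    · exact le_iInf fun d => iInf₂_le d.1 d.2.2
    · refine le_iInf₂ fun b hb => ?_
      obtain ⟨d, hd, hbd, hda⟩ := hD b a hb (le_of_lt hb)
      exact (iInf_le _ (⟨d, hd, hda⟩ : ↥(D ∩ Iio a))).trans
        (principal_mono.2 (Ioi_subset_Ioi hbd.le))
    · refine le_iInf₂ fun b hb => ?_
      obtain ⟨d, hd, had, hdb⟩ := hD a b hb le_rfl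
      exact (iInf_le _ (⟨d, hd, had⟩ : ↥(D ∩ Ioi a))).trans
        (principal_mono.2 (Iio_subset_Iio hdb.le))
  have := (hDc.mono (inter_subset_left (t := Iio a))).to_subtype
  have := (hDc.mono (inter_subset_left (t := Ioi a))).to_subtype
  rw [h]
  infer_instance

variable {ι Y : Type*} [Countable ι] [TopologicalSpace Y] {g : Y → (ι → X) → X}

/-- The function `h` is bounded above on `[α, ∞)^ι` for some `α`. -/
def EventuallyBdd (h : (ι → X) → X) : Prop :=
  ∃ α z, ∀ x : ι → X, (∀ i, α ≤ x i) → h x ≤ z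

/-- On a compact set of parameters, no function `g b` takes values both below `p` and above `q`
arbitrarily far out, with a uniform threshold. -/
theorem exists_forall_not_le_and_ge (hX : ∀ s : Set X, s.Countable → BddAbove s)
    (hg : Continuous (Function.uncurry g)) {K : Set Y} (hK : IsCompact K)
    {p q : X} (hpq : p < q) :
    ∃ α, ∀ b ∈ K, ∀ x y : ι → X, (∀ i, α ≤ x i) → (∀ i, α ≤ y i) → g b x ≤ p → g b y < q := by
  by_contra! hcon
  obtain ⟨z, γ, -, hz, hlim⟩ := exists_seq_tendsto_const (ι := ι ⊕ ι) hX
    (fun _ => {z | ∃ b ∈ K, g b (z ∘ Sum.inl) ≤ p ∧ q ≤ g b (z ∘ Sum.inr)})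
    (by
      intro _ α
      obtain ⟨b, hb, x, y, hx, hy, hxp, hyq⟩ := hcon α
      exact ⟨Sum.elim x y, ⟨b, hb, hxp, hyq⟩, by simp [hx, hy]⟩) p
  choose b hbK hbp hbq using hz
  obtain ⟨c, -, hc⟩ := hK.ultrafilter_le_nhds ((hyperfilter ℕ : Ultrafilter ℕ).map b)
    (le_principal_iff.2 (Filter.mem_map.2 (Eventually.of_forall hbK)))
  have hc' : Tendsto b (hyperfilter ℕ : Filter ℕ) (𝓝 c) := hc
  have hz' : Tendsto z (hyperfilter ℕ : Filter ℕ) (𝓝 fun _ => γ) :=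
    hlim.mono_left (Nat.hyperfilter_le_atTop)
  rw [tendsto_pi_nhds] at hz'
  have key : ∀ s : ι → ι ⊕ ι, Tendsto (fun k => g (b k) (z k ∘ s)) (hyperfilter ℕ : Filter ℕ)
      (𝓝 (g c fun _ => γ)) := fun s =>
    (hg.tendsto (c, fun _ => γ)).comp
      (hc'.prodMk_nhds (tendsto_pi_nhds.2 fun i => hz' (s i)))
  exact absurd ((ge_of_tendsto' (key _) hbq).trans (le_of_tendsto' (key _) hbp)) hpq.not_ge

theorem EventuallyBdd.eventually_nhds [NoMaxOrder X] [FirstCountableTopology Y]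
    (hX : ∀ s : Set X, s.Countable → BddAbove s)
    (hg : Continuous (Function.uncurry g)) {b : Y} (hb : EventuallyBdd (g b)) :
    ∃ α z, ∀ᶠ c in 𝓝 b, ∀ x : ι → X, (∀ i, α ≤ x i) → g c x ≤ z := by
  obtain ⟨α, z, hz⟩ := hb
  obtain ⟨q, hq⟩ := exists_gt z
  by_contra! hcon
  obtain ⟨U, hU⟩ := (𝓝 b).exists_antitone_basis
  obtain ⟨x, γ, hγ, hx, hlim⟩ := exists_seq_tendsto_const hX
    (fun k => {x : ι → X | ∃ c ∈ U k, q < g c x})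
    (by
      intro k β
      obtain ⟨c, ⟨x, hx, hqx⟩, hc⟩ := ((hcon β q).and_eventually (hU.mem k)).exists
      exact ⟨x, ⟨c, hc, hqx⟩, hx⟩) α
  choose c hcU hc using hx
  have := (hg.tendsto (b, fun _ => γ)).comp ((hU.tendsto hcU).prodMk_nhds hlim)
  exact absurd ((ge_of_tendsto' this fun k => (hc k).le).trans (hz _ fun _ => hγ)) hq.not_ge

theorem isClopen_setOf_eventuallyBdd [NoMaxOrder X] [FirstCountableTopology Y]
    (hX : ∀ s : Set X, s.Countable → BddAbove s) (hg : Continuous (Function.uncurry g)) :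
    IsClopen {b | EventuallyBdd (g b)} := by
  constructor
  · refine IsSeqClosed.isClosed fun b c hb hlim => ?_
    choose α z hz using hb
    obtain ⟨A, hA⟩ := hX _ (countable_range α)
    obtain ⟨Z, hZ⟩ := hX _ (countable_range z)
    refine ⟨A, Z, fun x hx => ?_⟩
    have := (hg.tendsto (c, x)).comp (hlim.prodMk_nhds tendsto_const_nhds)
    exact le_of_tendsto' this fun k =>
      (hz k x fun i => (hA (mem_range_self k)).trans (hx i)).trans (hZ (mem_range_self k))
  · rw [isOpen_iff_mem_nhds]
    intro b hb
    obtain ⟨α, z, h⟩ := EventuallyBdd.eventually_nhds hX hg hb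
    exact h.mono fun c hc => ⟨α, z, hc⟩

theorem EventuallyBdd.of_preconnectedSpace [NoMaxOrder X] [FirstCountableTopology Y]
    [PreconnectedSpace Y] (hX : ∀ s : Set X, s.Countable → BddAbove s)
    (hg : Continuous (Function.uncurry g)) {b : Y} (hb : EventuallyBdd (g b)) (c : Y) :
    EventuallyBdd (g c) := by
  have := (isClopen_setOf_eventuallyBdd hX hg).eq_univ ⟨b, hb⟩
  exact this.ge (mem_univ c)

theorem exists_bound_of_isCompact [NoMaxOrder X] [FirstCountableTopology Y] [Nonempty X]
    (hX : ∀ s : Set X, s.Countable → BddAbove s) (hg : Continuous (Function.uncurry g))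
    {K : Set Y} (hK : IsCompact K) (hb : ∀ b ∈ K, EventuallyBdd (g b)) :
    ∃ α z, ∀ b ∈ K, ∀ x : ι → X, (∀ i, α ≤ x i) → g b x ≤ z := by
  obtain ⟨o⟩ := ‹Nonempty X›
  refine hK.induction_on (p := fun K => ∃ α z, ∀ b ∈ K, ∀ x : ι → X, (∀ i, α ≤ x i) → g b x ≤ z)
    ⟨o, o, by simp⟩ ?_ ?_ ?_
  · rintro s t hst ⟨α, z, h⟩
    exact ⟨α, z, fun b hb => h b (hst hb)⟩
  · rintro s t ⟨α, z, h⟩ ⟨α', z', h'⟩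
    refine ⟨max α α', max z z', fun b hb x hx => ?_⟩
    rcases hb with hb | hb
    · exact (h b hb x fun i => (le_max_left _ _).trans (hx i)).trans (le_max_left _ _)
    · exact (h' b hb x fun i => (le_max_right _ _).trans (hx i)).trans (le_max_right _ _)
  · intro b hbK
    obtain ⟨α, z, h⟩ := (hb b hbK).eventually_nhds hX hg
    exact ⟨_, mem_nhdsWithin_of_mem_nhds h, α, z, fun c hc => hc⟩

theorem exists_forall_eq_of_isCompact [NoMaxOrder X] [FirstCountableTopology Y] [Nonempty X]
    (hX : ∀ s : Set X, s.Countable → BddAbove s)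
    (hD : ∀ z : X, ∃ D : Set X, D.Countable ∧ ∀ x y, x < y → x ≤ z → ∃ d ∈ D, x < d ∧ d < y)
    (hg : Continuous (Function.uncurry g))
    {K : Set Y} (hK : IsCompact K) (hb : ∀ b ∈ K, EventuallyBdd (g b)) :
    ∃ α, ∀ b ∈ K, ∀ x y : ι → X, (∀ i, α ≤ x i) → (∀ i, α ≤ y i) → g b x = g b y := by
  obtain ⟨α, z, hz⟩ := exists_bound_of_isCompact hX hg hK hb
  obtain ⟨D, hDc, hD⟩ := hD z
  have : ∀ d : X × X, ∃ β, d.1 < d.2 → ∀ b ∈ K, ∀ x y : ι → X,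
      (∀ i, β ≤ x i) → (∀ i, β ≤ y i) → g b x ≤ d.1 → g b y < d.2 := by
    intro d
    by_cases h : d.1 < d.2
    · obtain ⟨β, hβ⟩ := exists_forall_not_le_and_ge hX hg hK h
      exact ⟨β, fun _ => hβ⟩
    · exact ⟨d.1, fun h' => absurd h' h⟩
  choose β hβ using this
  obtain ⟨A, hA⟩ := hX (insert α (β '' D ×ˢ D)) (((hDc.prod hDc).image β).insert α)
  have hle : ∀ b ∈ K, ∀ x y : ι → X, (∀ i, A ≤ x i) → (∀ i, A ≤ y i) → g b y ≤ g b x := by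
    intro b hbK x y hx hy
    by_contra! hlt
    have hαx : ∀ i, α ≤ x i := fun i => (hA (mem_insert _ _)).trans (hx i)
    have hαy : ∀ i, α ≤ y i := fun i => (hA (mem_insert _ _)).trans (hy i)
    obtain ⟨q, hqD, hxq, hqy⟩ := hD _ _ hlt (hz b hbK x hαx)
    obtain ⟨p, hpD, hxp, hpq⟩ := hD _ _ hxq (hz b hbK x hαx)
    have hβA : β (p, q) ≤ A := hA (mem_insert_of_mem _ (mem_image_of_mem β ⟨hpD, hqD⟩))
    exact hqy.not_gt (hβ (p, q) hpq b hbK x y (fun i => hβA.trans (hx i))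
      (fun i => hβA.trans (hy i)) hxp.le)
  exact ⟨A, fun b hbK x y hx hy => (hle b hbK y x hy hx).antisymm (hle b hbK x y hx hy)⟩

theorem exists_forall_le_of_isCompact [NoMaxOrder X]
    (hX : ∀ s : Set X, s.Countable → BddAbove s) (hg : Continuous (Function.uncurry g))
    {K : Set Y} (hK : IsCompact K) (hb : ∀ b ∈ K, ¬ EventuallyBdd (g b)) (β : X) :
    ∃ α, ∀ b ∈ K, ∀ x : ι → X, (∀ i, α ≤ x i) → β ≤ g b x := by
  obtain ⟨q, hq⟩ := exists_gt β
  obtain ⟨α, hα⟩ := exists_forall_not_le_and_ge hX hg hK hq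
  refine ⟨α, fun b hbK x hx => ?_⟩
  by_contra! hlt
  exact hb b hbK ⟨α, q, fun y hy => (hα b hbK x y hx hy hlt.le).le⟩

/-- Boundedness far out can be tested on the diagonal. -/
theorem eventuallyBdd_iff_bddAbove_range_const [NoMaxOrder X] [OrderBot X]
    (hX : ∀ s : Set X, s.Countable → BddAbove s) {h : (ι → X) → X} (hh : Continuous h) :
    EventuallyBdd h ↔ BddAbove (range fun t : X => h fun _ => t) := by
  constructor
  · rintro ⟨α, z, hz⟩
    have hc : Continuous fun t : X => h fun _ => t := hh.comp (by fun_prop)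
    obtain ⟨w, hw⟩ := ((isCompact_Icc (a := (⊥ : X)) (b := α)).image hc).bddAbove
    refine ⟨max z w, ?_⟩
    rintro _ ⟨t, rfl⟩
    rcases le_total α t with ht | ht
    · exact (hz _ fun _ => ht).trans (le_max_left _ _)
    · exact (hw (mem_image_of_mem _ ⟨bot_le, ht⟩)).trans (le_max_right _ _)
  · rintro ⟨z, hz⟩
    obtain ⟨q, hq⟩ := exists_gt z
    by_contra hcon
    unfold EventuallyBdd at hcon
    push Not at hcon
    obtain ⟨x, γ, -, hx, hlim⟩ := exists_seq_tendsto_const hX (fun _ => {x : ι → X | q < h x})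
      (fun _ α => by
        obtain ⟨x, hx, hqx⟩ := hcon α q
        exact ⟨x, hqx, hx⟩) z
    exact absurd ((ge_of_tendsto' ((hh.tendsto _).comp hlim) fun k => (hx k).le).trans
      (hz (mem_range_self γ))) hq.not_ge

end Interleaving
section LongRayOrder

theorem sSup_lt_omega1 {T : Set Ordinal} (hT : T.Countable) (h : ∀ o ∈ T, o < Omega1) :
    sSup T < Omega1 := by
  have := hT.to_subtype
  rw [sSup_eq_iSup']
  exact Ordinal.iSup_lt_omega_one fun o => h o.1 o.2

theorem succ_lt_omega1 {o : Ordinal} (h : o < Omega1) : Order.succ o < Omega1 :=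
  (Cardinal.isSuccLimit_omega 1).succ_lt h

theorem countable_Iic_of_lt_omega1 {o : Ordinal} (h : o < Omega1) : (Iic o).Countable := by
  rw [← Order.Iio_succ, ← Cardinal.le_aleph0_iff_set_countable, Cardinal.mk_Iio_ordinal,
    Cardinal.lift_le_aleph0, ← Order.lt_succ_iff, Cardinal.succ_aleph0]
  exact Cardinal.lt_omega_iff_card_lt.1 (succ_lt_omega1 h)

theorem LongRay.lt_iff {x y : LongRay} :
    x < y ↔ (ofLex x).1 < (ofLex y).1 ∨ (ofLex x).1 = (ofLex y).1 ∧ (ofLex x).2 < (ofLex y).2 :=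
  Prod.Lex.lt_iff

theorem LongRay.le_iff {x y : LongRay} :
    x ≤ y ↔ (ofLex x).1 < (ofLex y).1 ∨ (ofLex x).1 = (ofLex y).1 ∧ (ofLex x).2 ≤ (ofLex y).2 :=
  Prod.Lex.le_iff

theorem ordR_of_lt {o : Ordinal} (h : o < Omega1) :
    ordR o = toLex (⟨o, h⟩, ⟨0, by simp⟩) := dif_pos h

theorem LongRay.lt_ordR_iff {o : Ordinal} (h : o < Omega1) {x : LongRay} :
    x < ordR o ↔ (ofLex x).1.1 < o := by
  rw [ordR_of_lt h]
  refine LongRay.lt_iff.trans ⟨?_, fun hx => Or.inl hx⟩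
  rintro (hx | ⟨-, hx⟩)
  · exact hx
  · exact absurd hx (not_lt.2 (ofLex x).2.2.1)

theorem LongRay.ordR_le_iff {o : Ordinal} (h : o < Omega1) {x : LongRay} :
    ordR o ≤ x ↔ o ≤ (ofLex x).1.1 := by
  rw [← not_lt, LongRay.lt_ordR_iff h, not_lt]

theorem ordR_le_ordR {o o' : Ordinal} (h' : o' < Omega1) (hle : o ≤ o') : ordR o ≤ ordR o' := by
  rw [LongRay.ordR_le_iff (hle.trans_lt h'), ordR_of_lt h']
  exact hle

theorem LongRay.rayZero_le (x : LongRay) : rayZero ≤ x := by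
  have : rayZero = ordR 0 := (ordR_of_lt omega1_pos).symm
  rw [this, LongRay.ordR_le_iff omega1_pos]
  exact zero_le

theorem LongRay.lt_ordR_succ (x : LongRay) : x < ordR (Order.succ (ofLex x).1.1) :=
  (LongRay.lt_ordR_iff (succ_lt_omega1 (ofLex x).1.2)).2 (Order.lt_succ _)

theorem LongRay.bddAbove_of_countable {s : Set LongRay} (hs : s.Countable) : BddAbove s := by
  have hlt : sSup ((fun x : LongRay => Order.succ (ofLex x).1.1) '' s) < Omega1 :=
    sSup_lt_omega1 (hs.image _) (by
      rintro _ ⟨x, -, rfl⟩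
      exact succ_lt_omega1 (ofLex x).1.2)
  refine ⟨ordR _, fun x hx => ((LongRay.lt_ordR_iff hlt).2 ?_).le⟩
  have := (hs.image fun x : LongRay => Order.succ (ofLex x).1.1).to_subtype
  exact (Order.lt_succ _).trans_le (le_csSup Ordinal.bddAbove_of_small (mem_image_of_mem _ hx))

theorem LongRay.exists_countable_dense_initial (z : LongRay) :
    ∃ D : Set LongRay, D.Countable ∧ ∀ x y, x < y → x ≤ z → ∃ d ∈ D, x < d ∧ d < y := by
  let F : {o : Ordinal // o < Omega1} × ℚ → LongRay := fun p =>
    if h : (p.2 : ℝ) ∈ Ico (0 : ℝ) 1 then toLex (p.1, ⟨p.2, h⟩) else z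
  have hc : (Iic (ofLex z).1).Countable :=
    ((countable_Iic_of_lt_omega1 (ofLex z).1.2).preimage Subtype.val_injective).mono
      fun o ho => ho
  refine ⟨F '' (Iic (ofLex z).1 ×ˢ univ), (hc.prod countable_univ).image F, fun x y hxy hxz => ?_⟩
  have hx1 : (ofLex x).1 ≤ (ofLex z).1 := Prod.Lex.monotone_fst_ofLex hxz
  obtain ⟨r, hr, hr1, hry⟩ : ∃ r : ℝ, ((ofLex x).2 : ℝ) < r ∧ r ≤ 1 ∧
      ∀ t : Ico (0 : ℝ) 1, (t : ℝ) < r → toLex ((ofLex x).1, t) < y := by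
    rcases LongRay.lt_iff.1 hxy with h | ⟨h, h'⟩
    · exact ⟨1, (ofLex x).2.2.2, le_rfl, fun t _ => LongRay.lt_iff.2 (Or.inl h)⟩
    · exact ⟨(ofLex y).2, h', (ofLex y).2.2.2.le, fun t ht => LongRay.lt_iff.2 (Or.inr ⟨h, ht⟩)⟩
  obtain ⟨q, hxq, hqr⟩ := exists_rat_btwn hr
  have hq : (q : ℝ) ∈ Ico (0 : ℝ) 1 := ⟨(ofLex x).2.2.1.trans hxq.le, hqr.trans_le hr1⟩
  have hF : F ((ofLex x).1, q) = toLex ((ofLex x).1, ⟨q, hq⟩) := dif_pos hq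
  refine ⟨F ((ofLex x).1, q), mem_image_of_mem F ⟨hx1, mem_univ _⟩, ?_, ?_⟩
  · rw [hF]
    exact LongRay.lt_iff.2 (Or.inr ⟨rfl, hxq⟩)
  · rw [hF]
    exact hry _ hqr

instance : DenselyOrdered LongRay := ⟨fun x y hxy =>
  let ⟨_, _, h⟩ := LongRay.exists_countable_dense_initial x
  let ⟨d, _, hd⟩ := h x y hxy le_rfl
  ⟨d, hd⟩⟩

instance : NoMaxOrder LongRay := ⟨fun x => ⟨_, x.lt_ordR_succ⟩⟩

instance : OrderBot LongRay where
  bot := rayZero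
  bot_le := LongRay.rayZero_le

theorem LongRay.exists_isLUB {s : Set LongRay} (_hne : s.Nonempty) (hb : BddAbove s) :
    ∃ x, IsLUB s x := by
  obtain ⟨z, hz⟩ := hb
  have hex : ∃ o, o < Omega1 ∧ ordR o ∈ upperBounds s :=
    ⟨_, succ_lt_omega1 (ofLex z).1.2, fun x hx => (hz hx).trans z.lt_ordR_succ.le⟩
  obtain ⟨o, ⟨ho, hos⟩, hmin⟩ := WellFounded.has_min (wellFounded_lt (α := Ordinal))
    {o | o < Omega1 ∧ ordR o ∈ upperBounds s} hex
  by_cases hlub : IsLUB s (ordR o)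
  · exact ⟨_, hlub⟩
  obtain ⟨u, hu, huo⟩ : ∃ u ∈ upperBounds s, u < ordR o := by
    by_contra! h
    exact hlub ⟨hos, h⟩
  have huo' := (LongRay.lt_ordR_iff ho).1 huo
  have hua : ordR (ofLex u).1.1 ∉ upperBounds s := fun h =>
    hmin _ ⟨(ofLex u).1.2, h⟩ huo'
  obtain ⟨x₀, hx₀, hux₀⟩ : ∃ x₀ ∈ s, ordR (ofLex u).1.1 < x₀ := by
    by_contra! h
    exact hua h
  have hx₀u : (ofLex x₀).1 = (ofLex u).1 :=
    (Prod.Lex.monotone_fst_ofLex (hu hx₀)).antisymm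
      ((LongRay.ordR_le_iff (ofLex u).1.2).1 hux₀.le)
  have hsnd : ∀ x ∈ s, (ofLex x).1 = (ofLex u).1 → ((ofLex x).2 : ℝ) ≤ (ofLex u).2 := by
    intro x hx hxu
    rcases LongRay.le_iff.1 (hu hx) with h | ⟨-, h⟩
    · exact absurd hxu h.ne
    · exact h
  let A : Set ℝ := (fun x : LongRay => ((ofLex x).2 : ℝ)) '' {x ∈ s | (ofLex x).1 = (ofLex u).1}
  have hAu : ((ofLex u).2 : ℝ) ∈ upperBounds A := by
    rintro _ ⟨x, ⟨hx, hxu⟩, rfl⟩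
    exact hsnd x hx hxu
  have hA₀ : ((ofLex x₀).2 : ℝ) ∈ A := mem_image_of_mem _ ⟨hx₀, hx₀u⟩
  have hA : IsLUB A (sSup A) := isLUB_csSup ⟨_, hA₀⟩ ⟨_, hAu⟩
  refine ⟨toLex ((ofLex u).1, ⟨sSup A, (ofLex x₀).2.2.1.trans (hA.1 hA₀),
    (hA.2 hAu).trans_lt (ofLex u).2.2.2⟩), fun x hx => ?_, fun v hv => ?_⟩
  · rcases (Prod.Lex.monotone_fst_ofLex (hu hx)).lt_or_eq with h | h
    · exact LongRay.le_iff.2 (Or.inl h)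
    · exact LongRay.le_iff.2 (Or.inr ⟨h, hA.1 (mem_image_of_mem _ ⟨hx, h⟩)⟩)
  · have hav : (ofLex x₀).1 ≤ (ofLex v).1 := Prod.Lex.monotone_fst_ofLex (hv hx₀)
    rw [hx₀u] at hav
    rcases hav.lt_or_eq with h | h
    · exact LongRay.le_iff.2 (Or.inl h)
    · refine LongRay.le_iff.2 (Or.inr ⟨h, hA.2 ?_⟩)
      rintro _ ⟨x, ⟨hx, hxu⟩, rfl⟩
      rcases LongRay.le_iff.1 (hv hx) with h' | ⟨-, h'⟩
      · exact absurd (hxu.trans h) h'.ne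
      · exact h'

open Classical in
instance : SupSet LongRay :=
  ⟨fun s => if h : s.Nonempty ∧ BddAbove s then (LongRay.exists_isLUB h.1 h.2).choose else ⊥⟩

theorem LongRay.isLUB_sSup (s : Set LongRay) (hb : BddAbove s) (hne : s.Nonempty) :
    IsLUB s (sSup s) := by
  have h : sSup s = (LongRay.exists_isLUB hne hb).choose := dif_pos ⟨hne, hb⟩
  rw [h]
  exact (LongRay.exists_isLUB hne hb).choose_spec

/-- Not a global instance, so that the order on `LongRay` is still found through its
`LinearOrder` instance. -/
abbrev LongRay.conditionallyCompleteLinearOrder : ConditionallyCompleteLinearOrder LongRay where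
  __ := (inferInstance : LinearOrder LongRay)
  __ := conditionallyCompleteLatticeOfLatticeOfsSup LongRay LongRay.isLUB_sSup
  csSup_of_not_bddAbove s hs := by
    have h₁ : sSup s = ⊥ := dif_neg fun h => hs h.2
    have h₂ : sSup (∅ : Set LongRay) = ⊥ := dif_neg fun h => Set.not_nonempty_empty h.1
    exact h₁.trans h₂.symm
  csInf_of_not_bddBelow s hs := absurd (OrderBot.bddBelow s) hs

attribute [local instance] LongRay.conditionallyCompleteLinearOrder

instance : FirstCountableTopology LongRay :=
  firstCountableTopology_of_countable_dense_initial LongRay.exists_countable_dense_initial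

end LongRayOrder

section Club

theorem ContainsClub.mono {S T : Set Ordinal} (hS : ContainsClub S) (h : S ⊆ T) :
    ContainsClub T :=
  let ⟨C, hC, h'⟩ := hS
  ⟨C, hC.trans h, h'⟩

theorem bot_lt_ordR {α : Ordinal} (hα : α < Omega1) (h : 0 < α) : ⊥ < ordR α :=
  (LongRay.lt_ordR_iff hα).2 h

/-- Closure points of a cofinal relation on the long ray form a club. -/
theorem containsClub_of_forall_exists {P : LongRay → LongRay → Prop} (hP : ∀ β, ∃ α, P β α)
    (hanti : ∀ β β' α, β ≤ β' → P β' α → P β α) (hmono : ∀ β α α', α ≤ α' → P β α → P β α') :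
    ContainsClub {α | α < Omega1 ∧ 0 < α ∧ ∀ r < ordR α, P r (ordR α)} := by
  refine ⟨_, Subset.rfl, fun a ha => ?_, fun T hT hTc hTne => ?_⟩
  · have hnext : ∀ o : {o : Ordinal // o < Omega1}, ∃ o' : {o : Ordinal // o < Omega1},
        o.1 < o'.1 ∧ P (ordR o.1) (ordR o'.1) := by
      intro o
      obtain ⟨α, hα⟩ := hP (ordR o.1)
      have hlt := succ_lt_omega1 (max_lt o.2 (ofLex α).1.2)
      refine ⟨⟨_, hlt⟩, Order.lt_succ_of_le (le_max_left _ _), hmono _ _ _ ?_ hα⟩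
      exact ((LongRay.lt_ordR_iff hlt).2 (Order.lt_succ_of_le (le_max_right _ _))).le
    choose u hu huP using hnext
    let s : ℕ → {o : Ordinal // o < Omega1} := fun k => Nat.rec ⟨a, ha⟩ (fun _ => u) k
    have hc := countable_range fun k => (s k).1
    have hlt : sSup (range fun k => (s k).1) < Omega1 := sSup_lt_omega1 hc (by
      rintro _ ⟨k, rfl⟩
      exact (s k).2)
    have hle : ∀ k, (s k).1 ≤ sSup (range fun k => (s k).1) := fun k =>
      le_csSup (Ordinal.bddAbove_of_small) (mem_range_self k)
    refine ⟨_, ⟨hlt, ?_, fun r hr => ?_⟩, hle 0⟩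
    · exact (zero_le.trans_lt (hu (s 0))).trans_le (hle 1)
    · obtain ⟨_, ⟨k, rfl⟩, hk⟩ := exists_lt_of_lt_csSup (range_nonempty _)
        ((LongRay.lt_ordR_iff hlt).1 hr)
      refine hmono _ _ _ (ordR_le_ordR hlt (hle (k + 1)))
        (hanti _ (ordR (s k).1) _ ?_ (huP (s k)))
      exact ((LongRay.lt_ordR_iff (s k).2).2 hk).le
  · have hlt : sSup T < Omega1 := sSup_lt_omega1 hTc fun o ho => (hT ho).1
    have := hTc.to_subtype
    have hle : ∀ o ∈ T, o ≤ sSup T := fun o ho => le_csSup Ordinal.bddAbove_of_small ho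
    obtain ⟨o, ho⟩ := hTne
    refine ⟨hlt, (hT ho).2.1.trans_le (hle o ho), fun r hr => ?_⟩
    obtain ⟨t, ht, hrt⟩ := exists_lt_of_lt_csSup ⟨o, ho⟩ ((LongRay.lt_ordR_iff hlt).1 hr)
    exact hmono _ _ _ (ordR_le_ordR hlt (hle t ht))
      ((hT ht).2.2 r ((LongRay.lt_ordR_iff (hT ht).1).2 hrt))

end Club

section Piecewise

attribute [local instance] LongRay.conditionallyCompleteLinearOrder

variable {n : ℕ} {I : Finset (Fin n)}

theorem image_Delta_eq_range (f : (Fin n → LongRay) → LongRay) (hI : I.Nonempty) :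
    f '' Delta n I (fun _ => rayZero) =
      range fun t => f (I.piecewise (fun _ => t) fun _ => rayZero) := by
  apply Subset.antisymm
  · rintro _ ⟨x, ⟨hx, hx'⟩, rfl⟩
    obtain ⟨i, hi⟩ := hI
    refine ⟨x i, congrArg f (funext fun j => ?_)⟩
    by_cases hj : j ∈ I
    · simp [hj, hx i hi j hj]
    · simp [hj, hx' j hj]
  · rintro _ ⟨t, rfl⟩
    exact ⟨_, ⟨fun i hi j hj => by simp [hi, hj], fun j hj => by simp [hj]⟩, rfl⟩

/-- A point agreeing with `b` off `I` is recovered after changing the irrelevant coordinates. -/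
theorem piecewise_piecewise_bot_eq {b x a : Fin n → LongRay} (hx : ∀ j ∉ I, x j = b j) :
    I.piecewise (I.piecewise x a) (I.piecewise ⊥ b) = x := by
  funext j
  by_cases hj : j ∈ I
  · simp [hj]
  · simp [hj, hx j hj]

theorem le_piecewise_const {x : Fin n → LongRay} {a : LongRay} (hx : ∀ i ∈ I, a ≤ x i) (i : Fin n) :
    a ≤ I.piecewise x (fun _ => a) i := by
  by_cases hi : i ∈ I
  · simp [hi, hx i hi]
  · simp [hi]

theorem piecewise_bot_le {b : Fin n → LongRay} {a : LongRay} (hb : ∀ j ∉ I, b j ≤ a) (j : Fin n) :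
    I.piecewise ⊥ b j ≤ a := by
  by_cases hj : j ∈ I
  · simp [hj]
  · simp [hj, hb j hj]

theorem exists_lt_forall_le {a : LongRay} (ha : ⊥ < a) {c : Fin n → LongRay} (hc : ∀ j, c j < a) :
    ∃ β < a, ∀ j, c j ≤ β :=
  ⟨Finset.univ.sup c, (Finset.sup_lt_iff ha).2 fun j _ => hc j,
    fun j => Finset.le_sup (Finset.mem_univ j)⟩

theorem forall_le_of_forall_lt {a : LongRay} (ha : ⊥ < a) {S : Set (Fin n → LongRay)}
    (hS : IsClosed S) (h : ∀ c : Fin n → LongRay, (∀ j, c j < a) → c ∈ S)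
    (c : Fin n → LongRay) (hc : ∀ j, c j ≤ a) : c ∈ S := by
  have hsub : (univ.pi fun _ : Fin n => Iio a) ⊆ S := fun c hc => h c fun j => hc j (mem_univ j)
  refine closure_minimal hsub hS ?_
  rw [closure_pi_set, closure_Iio' ⟨⊥, ha⟩]
  exact fun j _ => hc j

end Piecewise

/-- (i) if `f` is `I`-bounded, the set of `α < ω₁` such that `f` is
constant on each `E_I(b,α)` with `b ∈ [0,α]^{N∖I}` contains a club; (ii) if `f` is
`I`-cofinal, the set of `α < ω₁` with `f(Δ_I(b) ∩ M_I(α)) ⊆ [α,ω₁)` for all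
`b ∈ [0,α]^{N∖I}` contains a club. -/
theorem club_of_good_ordinals (n : ℕ) (f : (Fin n → LongRay) → LongRay)
    (hf : Continuous f) (I : Finset (Fin n)) (hI : I.Nonempty) :
    (¬ ICofinal n f I →
      ContainsClub {α : Ordinal | α < Omega1 ∧
        ∀ b : Fin n → LongRay, (∀ j ∉ I, b j ≤ ordR α) →
          ∀ x ∈ ESet n I b (ordR α), ∀ y ∈ ESet n I b (ordR α), f x = f y}) ∧
    (ICofinal n f I →
      ContainsClub {α : Ordinal | α < Omega1 ∧
        ∀ b : Fin n → LongRay, (∀ j ∉ I, b j ≤ ordR α) →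
          ∀ x ∈ Delta n I b ∩ MSet n I (ordR α), ordR α ≤ f x}) := by
  let := LongRay.conditionallyCompleteLinearOrder
  have hg : Continuous (Function.uncurry fun b x : Fin n → LongRay => f (I.piecewise x b)) := by
    refine hf.comp (continuous_pi fun i => ?_)
    by_cases hi : i ∈ I
    · simpa [hi, Function.comp_def] using (continuous_apply i).comp continuous_snd
    · simpa [hi, Function.comp_def] using (continuous_apply i).comp continuous_fst
  have hX := fun s : Set LongRay => LongRay.bddAbove_of_countable (s := s)
  have hbdd : EventuallyBdd (fun x => f (I.piecewise x fun _ => rayZero)) ↔ ¬ ICofinal n f I := by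
    rw [ICofinal, not_not, image_Delta_eq_range f hI]
    exact eventuallyBdd_iff_bddAbove_range_const hX (hg.comp (Continuous.prodMk_right _))
  constructor
  · intro hI'
    have hb : ∀ b, EventuallyBdd fun x => f (I.piecewise x b) :=
      EventuallyBdd.of_preconnectedSpace hX hg (hbdd.2 hI')
    refine (containsClub_of_forall_exists (P := fun β α => ∀ b, (∀ j, b j ≤ β) →
      ∀ x y : Fin n → LongRay, (∀ i, α ≤ x i) → (∀ i, α ≤ y i) →
        f (I.piecewise x b) = f (I.piecewise y b)) ?_ ?_ ?_).mono ?_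
    · intro β
      obtain ⟨α, hα⟩ := exists_forall_eq_of_isCompact hX LongRay.exists_countable_dense_initial hg
        (isCompact_Icc (a := fun _ => ⊥) (b := fun _ => β)) fun b _ => hb b
      exact ⟨α, fun b hb => hα b ⟨fun _ => bot_le, hb⟩⟩
    · exact fun β β' α hβ h b hb => h b fun j => (hb j).trans hβ
    · exact fun β α α' hα h b hb x y hx hy =>
        h b hb x y (fun i => hα.trans (hx i)) fun i => hα.trans (hy i)
    · rintro α ⟨hα, hα0, h⟩
      refine ⟨hα, fun b hb x hx y hy => ?_⟩
      have hbot := bot_lt_ordR hα hα0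
      rw [← piecewise_piecewise_bot_eq (a := fun _ => ordR α) hx.2,
        ← piecewise_piecewise_bot_eq (a := fun _ => ordR α) hy.2]
      refine forall_le_of_forall_lt (S := {b | f (I.piecewise (I.piecewise x fun _ => ordR α) b) =
        f (I.piecewise (I.piecewise y fun _ => ordR α) b)}) hbot ?_ ?_ _ ?_
      · exact isClosed_eq (hg.comp (Continuous.prodMk_left _)) (hg.comp (Continuous.prodMk_left _))
      · intro c hc
        obtain ⟨β, hβ, hcβ⟩ := exists_lt_forall_le hbot hc
        refine h β hβ c hcβ _ _ ?_ ?_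
        · exact le_piecewise_const hx.1
        · exact le_piecewise_const hy.1
      · exact piecewise_bot_le hb
  · intro hI'
    have hb : ∀ b, ¬ EventuallyBdd fun x => f (I.piecewise x b) := fun b hb =>
      hbdd.1 (EventuallyBdd.of_preconnectedSpace hX hg hb _) hI'
    refine (containsClub_of_forall_exists (P := fun β α => ∀ b, (∀ j, b j ≤ β) →
      ∀ x : Fin n → LongRay, (∀ i, α ≤ x i) → β ≤ f (I.piecewise x b)) ?_ ?_ ?_).mono ?_
    · intro β
      obtain ⟨α, hα⟩ := exists_forall_le_of_isCompact hX hg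
        (isCompact_Icc (a := fun _ => ⊥) (b := fun _ => β)) (fun b _ => hb b) β
      exact ⟨α, fun b hb => hα b ⟨fun _ => bot_le, hb⟩⟩
    · exact fun β β' α hβ h b hb x hx => hβ.trans (h b (fun j => (hb j).trans hβ) x hx)
    · exact fun β α α' hα h b hb x hx => h b hb x fun i => hα.trans (hx i)
    · rintro α ⟨hα, hα0, h⟩
      refine ⟨hα, fun b hb x ⟨hx, hxα⟩ => ?_⟩
      have hbot := bot_lt_ordR hα hα0
      rw [← piecewise_piecewise_bot_eq (a := fun _ => ordR α) hx.2]
      refine forall_le_of_forall_lt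
        (S := {b | ordR α ≤ f (I.piecewise (I.piecewise x fun _ => ordR α) b)}) hbot
        (isClosed_le continuous_const (hg.comp (Continuous.prodMk_left _))) ?_ _
        (piecewise_bot_le hb)
      intro c hc
      obtain ⟨β, hβ, hcβ⟩ := exists_lt_forall_le hbot hc
      refine le_of_forall_lt_imp_le_of_dense fun r hr => (le_max_left r β).trans ?_
      exact h _ (max_lt hr hβ) c (fun j => (hcβ j).trans (le_max_right _ _)) _
        (le_piecewise_const hxα)
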